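/- Let β ∈ (0,1), h > 0, and let S₂ be a positive-integer-valued random variable whose increasing hazard rate μ₂ converges to μ₂(∞) ∈ (0,1]. For fixed μ₁∞ ∈ (0,1], consider w₁(n₁) at the limit: with A = ∑_{i=0}^{∞} β^i p₂(i) and B = ∑_{i=0}^{∞} β^i p̄₂(i), if the first-stage hazard μ₁(n) is increasing with limit μ₁∞, then the limit of the IHR-IHR Whittle index w₁(n) = h (1/(1−β) − ∑_i β^i p̄₁(i|n)(1 + β μ₁(n+i) B)) / (∑_i β^i p̄₁(i|n)(1 + β μ₁(n+i) B)) as n → ∞ equals h μ₁∞ · (β A)/(1 + β μ₁∞ B) · β/(1−β). -/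

import Mathlib

/-!
Write `m = μ₁∞`, and let `A = ∑ β^i p₂(i)`, `B = ∑ β^i p̄₂(i)`. Since
`p̄₁(i+1|n) = p̄₁(i|n) (1 - μ₁(n+i))`, one has `p̄₁(i|n) → (1 - m)^i` for each `i`, and the terms of
`D(n)` are dominated by `β^i (1 + β B)`; dominated convergence and the geometric series give
`D(n) → (1 + β m B) / (1 - β (1 - m))` (`tendsto_DfunII`). The limit of the index is then a rational
function of `m` and `B`, and summation by parts, `p₂(i) = p̄₂(i) - p̄₂(i+1)` with `p̄₂(0) = 1`, yields
`β A = 1 - (1 - β) B` (`beta_mul_tsum_pmf`), which turns it into the claimed form.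
-/

open MeasureTheory Filter

/-- Survival probability `P(S ≥ n+1)`. -/
noncomputable def surv {Ω : Type*} [MeasurableSpace Ω] (P : Measure Ω) (S : Ω → ℕ) (n : ℕ) : ℝ :=
  (P {ω | n + 1 ≤ S ω}).toReal

/-- Discrete hazard rate `μ(n) = P(S = n+1 | S ≥ n+1)`. -/
noncomputable def haz {Ω : Type*} [MeasurableSpace Ω] (P : Measure Ω) (S : Ω → ℕ) (n : ℕ) : ℝ :=
  (P {ω | S ω = n + 1}).toReal / surv P S n

/-- Conditional survival probability `p̄(i|n) = P(S ≥ n+i+1 | S ≥ n+1)`. -/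
noncomputable def pbar {Ω : Type*} [MeasurableSpace Ω] (P : Measure Ω) (S : Ω → ℕ)
    (i n : ℕ) : ℝ :=
  surv P S (n + i) / surv P S n

/-- `D(n) = ∑ β^i p̄₁(i|n)(1 + β μ₁(n+i) B)` with `B = ∑ β^j p̄₂(j)`. -/
noncomputable def DfunII {Ω : Type*} [MeasurableSpace Ω] (P : Measure Ω) (S₁ S₂ : Ω → ℕ)
    (β : ℝ) (n : ℕ) : ℝ :=
  ∑' i : ℕ, β ^ i * pbar P S₁ i n *
    (1 + β * haz P S₁ (n + i) * (∑' j : ℕ, β ^ j * surv P S₂ j))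

section Survival

variable {Ω : Type*} [MeasurableSpace Ω] (P : Measure Ω) {S : Ω → ℕ}

lemma surv_nonneg (S : Ω → ℕ) (n : ℕ) : 0 ≤ surv P S n := ENNReal.toReal_nonneg

lemma haz_nonneg (S : Ω → ℕ) (n : ℕ) : 0 ≤ haz P S n :=
  div_nonneg ENNReal.toReal_nonneg (surv_nonneg P S n)

lemma pbar_nonneg (S : Ω → ℕ) (i n : ℕ) : 0 ≤ pbar P S i n :=
  div_nonneg (surv_nonneg P S _) (surv_nonneg P S n)

variable [IsProbabilityMeasure P]

lemma surv_le_one (S : Ω → ℕ) (n : ℕ) : surv P S n ≤ 1 :=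
  ENNReal.toReal_le_of_le_ofReal zero_le_one (by simpa using prob_le_one)

lemma surv_zero (hS1 : ∀ ω, 1 ≤ S ω) : surv P S 0 = 1 := by
  simp [surv, hS1]

lemma pmf_eq_surv_sub (hS : Measurable S) (n : ℕ) :
    (P {ω | S ω = n + 1}).toReal = surv P S n - surv P S (n + 1) := by
  have hunion : {ω | n + 1 ≤ S ω} = {ω | S ω = n + 1} ∪ {ω | n + 1 + 1 ≤ S ω} := by
    ext ω
    simp only [Set.mem_ofPred_eq, Set.mem_union]
    omega
  have hdisj : Disjoint {ω | S ω = n + 1} {ω | n + 1 + 1 ≤ S ω} := by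
    rw [Set.disjoint_left]
    intro ω h1 h2
    simp only [Set.mem_ofPred_eq] at h1 h2
    omega
  have hmeas : MeasurableSet {ω | n + 1 + 1 ≤ S ω} := hS measurableSet_Ici
  unfold surv
  rw [hunion, measure_union hdisj hmeas,
    ENNReal.toReal_add (measure_ne_top _ _) (measure_ne_top _ _)]
  ring

lemma surv_antitone (hS : Measurable S) : Antitone (surv P S) := by
  refine antitone_nat_of_succ_le fun n => ?_
  have h : 0 ≤ (P {ω | S ω = n + 1}).toReal := ENNReal.toReal_nonneg
  rw [pmf_eq_surv_sub P hS n] at h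
  linarith

lemma haz_le_one (hS : Measurable S) (n : ℕ) : haz P S n ≤ 1 := by
  refine div_le_one_of_le₀ ?_ (surv_nonneg P S n)
  rw [pmf_eq_surv_sub P hS n]
  linarith [surv_nonneg P S (n + 1)]

lemma pbar_le_one (hS : Measurable S) (i n : ℕ) : pbar P S i n ≤ 1 :=
  div_le_one_of_le₀ (surv_antitone P hS (Nat.le_add_right n i)) (surv_nonneg P S n)

/-- The conditional survival probability is the product of the `1 - μ(n+k)`, `k < i`, here in
recursive form. -/
lemma pbar_succ (hS : Measurable S) (hpos : ∀ n, 0 < surv P S n) (i n : ℕ) :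
    pbar P S (i + 1) n = pbar P S i n * (1 - haz P S (n + i)) := by
  have h1 := (hpos n).ne'
  have h2 := (hpos (n + i)).ne'
  unfold pbar haz
  rw [pmf_eq_surv_sub P hS, ← add_assoc n i 1]
  field_simp
  ring

lemma tendsto_pbar (hS : Measurable S) (hpos : ∀ n, 0 < surv P S n) {m : ℝ}
    (hlim : Tendsto (fun n => haz P S n) atTop (nhds m)) (i : ℕ) :
    Tendsto (fun n => pbar P S i n) atTop (nhds ((1 - m) ^ i)) := by
  induction i with
  | zero =>
    have h : (fun n => pbar P S 0 n) = fun _ => (1 : ℝ) := by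
      funext n
      exact div_self (hpos n).ne'
    rw [h, pow_zero]
    exact tendsto_const_nhds
  | succ i ih =>
    simp only [pbar_succ P hS hpos, pow_succ]
    exact ih.mul (tendsto_const_nhds.sub (hlim.comp (tendsto_add_atTop_nat i)))

lemma summable_pow_mul_surv (S : Ω → ℕ) {β : ℝ} (h0 : 0 < β) (h1 : β < 1) :
    Summable fun i => β ^ i * surv P S i := by
  refine Summable.of_nonneg_of_le (fun i => mul_nonneg (by positivity) (surv_nonneg P S i))
    (fun i => ?_) (summable_geometric_of_lt_one h0.le h1)
  exact mul_le_of_le_one_right (by positivity) (surv_le_one P S i)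

/-- Summation by parts relating the generating function of the law of `S` to that of its
survival function: `β A = 1 - (1 - β) B`. -/
lemma beta_mul_tsum_pmf (hS : Measurable S) (hS1 : ∀ ω, 1 ≤ S ω) {β : ℝ}
    (h0 : 0 < β) (h1 : β < 1) :
    β * (∑' i : ℕ, β ^ i * (P {ω | S ω = i + 1}).toReal) =
      1 - (1 - β) * ∑' i : ℕ, β ^ i * surv P S i := by
  have hs := summable_pow_mul_surv P S h0 h1
  have hs' : Summable fun i => β ^ (i + 1) * surv P S (i + 1) :=
    (summable_nat_add_iff 1).2 hs
  have hshift := hs.tsum_eq_zero_add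
  rw [pow_zero, one_mul, surv_zero P hS1] at hshift
  have hterm : ∀ i : ℕ, β * (β ^ i * (P {ω | S ω = i + 1}).toReal) =
      β * (β ^ i * surv P S i) - β ^ (i + 1) * surv P S (i + 1) := by
    intro i
    rw [pmf_eq_surv_sub P hS]
    ring
  rw [← tsum_mul_left, tsum_congr hterm, (hs.mul_left β).tsum_sub hs', tsum_mul_left]
  linarith

/-- Dominated convergence for `D(n)`: since `p̄₁(i|n) ≤ 1` and `μ₁ ≤ 1`, the `i`-th term is bounded
by `β^i (1 + β B)`, and the limiting series is geometric with ratio `β (1 - m)`. -/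
lemma tendsto_DfunII (hS : Measurable S) (S₂ : Ω → ℕ) (hpos : ∀ n, 0 < surv P S n) {β m : ℝ}
    (h0 : 0 < β) (h1 : β < 1) (hm0 : 0 ≤ m) (hm1 : m ≤ 1)
    (hlim : Tendsto (fun n => haz P S n) atTop (nhds m)) :
    Tendsto (fun n => DfunII P S S₂ β n) atTop
      (nhds ((1 + β * m * ∑' j : ℕ, β ^ j * surv P S₂ j) / (1 - β * (1 - m)))) := by
  unfold DfunII
  set B := ∑' j : ℕ, β ^ j * surv P S₂ j with hB
  have hB0 : 0 ≤ B := tsum_nonneg fun j => mul_nonneg (by positivity) (surv_nonneg P S₂ j)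
  have hlt : β * (1 - m) < 1 := by nlinarith
  have hgeo : ∑' i : ℕ, β ^ i * (1 - m) ^ i * (1 + β * m * B) =
      (1 + β * m * B) / (1 - β * (1 - m)) := by
    simp only [← mul_pow]
    rw [tsum_mul_right, tsum_geometric_of_lt_one (mul_nonneg h0.le (by linarith)) hlt,
      div_eq_mul_inv, mul_comm]
  rw [← hgeo]
  refine tendsto_tsum_of_dominated_convergence (bound := fun i => β ^ i * (1 + β * B))
    ((summable_geometric_of_lt_one h0.le h1).mul_right _) (fun i => ?_)
    (Eventually.of_forall fun n i => ?_)
  · have hhaz : Tendsto (fun n => haz P S (n + i)) atTop (nhds m) :=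
      hlim.comp (tendsto_add_atTop_nat i)
    exact ((tendsto_pbar P hS hpos hlim i).const_mul _).mul
      (((hhaz.const_mul β).mul_const B).const_add 1)
  · have hz0 := haz_nonneg P S (n + i)
    have hz1 := haz_le_one P hS (n + i)
    have hp0 := pbar_nonneg P S i n
    have hp1 := pbar_le_one P hS i n
    rw [Real.norm_of_nonneg (by positivity)]
    have hle : β * haz P S (n + i) ≤ β := mul_le_of_le_one_right h0.le hz1
    have hpow : β ^ i * pbar P S i n ≤ β ^ i := mul_le_of_le_one_right (by positivity) hp1
    gcongr

end Survival

/-- In the IHR-IHR case, with `A = ∑ β^i p₂(i)` and `B = ∑ β^i p̄₂(i)`, the Whittle index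
`w₁(n) = h (1/(1−β) − D(n))/D(n)` converges as `n → ∞` to
`h μ₁∞ (β A)/(1 + β μ₁∞ B) · β/(1−β)`. -/
theorem IHR_IHR_w1_limit {Ω : Type*} [MeasurableSpace Ω] (P : Measure Ω)
    [IsProbabilityMeasure P] (S₁ S₂ : Ω → ℕ) (hS₁ : Measurable S₁) (hS₂ : Measurable S₂)
    (hS₁1 : ∀ ω, 1 ≤ S₁ ω) (hS₂1 : ∀ ω, 1 ≤ S₂ ω)
    (β h μ₁inf μ₂inf : ℝ) (hβ : β ∈ Set.Ioo (0:ℝ) 1) (hh : 0 < h)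
    (hpos₁ : ∀ n, 0 < surv P S₁ n) (hpos₂ : ∀ n, 0 < surv P S₂ n)
    (hIHR₁ : ∀ n, haz P S₁ n ≤ haz P S₁ (n + 1))
    (hIHR₂ : ∀ n, haz P S₂ n ≤ haz P S₂ (n + 1))
    (hlim₁ : Tendsto (fun n => haz P S₁ n) atTop (nhds μ₁inf))
    (hlim₂ : Tendsto (fun n => haz P S₂ n) atTop (nhds μ₂inf))
    (hμ₁inf : μ₁inf ∈ Set.Ioc (0:ℝ) 1) (hμ₂inf : μ₂inf ∈ Set.Ioc (0:ℝ) 1) :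
    Tendsto
      (fun n => h * (1 / (1 - β) - DfunII P S₁ S₂ β n) / DfunII P S₁ S₂ β n) atTop
      (nhds (h * μ₁inf * (β * (∑' i : ℕ, β ^ i * (P {ω | S₂ ω = i + 1}).toReal)) /
        (1 + β * μ₁inf * (∑' i : ℕ, β ^ i * surv P S₂ i)) * (β / (1 - β)))) := by
  obtain ⟨h0, h1⟩ := hβ
  obtain ⟨hm0, hm1⟩ := hμ₁inf
  have hD := tendsto_DfunII P hS₁ S₂ hpos₁ h0 h1 hm0.le hm1 hlim₁
  rw [beta_mul_tsum_pmf P hS₂ hS₂1 h0 h1]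
  set B := ∑' j : ℕ, β ^ j * surv P S₂ j with hB
  have hB0 : 0 ≤ B := tsum_nonneg fun j => mul_nonneg (by positivity) (surv_nonneg P S₂ j)
  have hnum : 0 < 1 + β * μ₁inf * B := by positivity
  have hden : 0 < 1 - β * (1 - μ₁inf) := by nlinarith
  have hβ1 : 0 < 1 - β := by linarith
  -- Here `1 - (1 - β) B` stands for `β A`.
  have hval : h * μ₁inf * (1 - (1 - β) * B) / (1 + β * μ₁inf * B) * (β / (1 - β)) =
      h * (1 / (1 - β) - (1 + β * μ₁inf * B) / (1 - β * (1 - μ₁inf))) /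
        ((1 + β * μ₁inf * B) / (1 - β * (1 - μ₁inf))) := by
    have hnum' := hnum.ne'
    have hden' := hden.ne'
    have hβ1' := hβ1.ne'
    field_simp
    ring
  rw [hval]
  exact ((hD.const_sub (1 / (1 - β))).const_mul h).div hD (div_pos hnum hden).ne'
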